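/- Fix n ≥ 1, T > 0, β > 0, κ > 0, I₀ ∈ (0,1), θ ∈ (0,1] and constants C₁, C₂ > 0. Suppose that for each t ∈ (0,T], p_t: ℝⁿ → [0,∞) is a measurable probability density (∫_{ℝⁿ} p_t(x) dx = 1) satisfying: (i) |p_t(x+h) − p_t(x)| ≤ C₁ ‖h‖^θ t^{−(θ+n)/β} for all x, h ∈ ℝⁿ, and (ii) ∫_{ℝⁿ} ‖x‖^{I₀} p_t(x) dx ≤ C₂ t^κ. Then for every τ ∈ (0,1] there is a constant C > 0 such that for all t ∈ (0,T] and all h ∈ ℝⁿ with ‖h‖ ≤ 1, ∫_{ℝⁿ} |p_t(x+h) − p_t(x)| dx ≤ C ( ‖h‖^θ t^{−((θ+n)/β + κ)} )^{τ I₀/(n+I₀)}. -/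

import Mathlib

open MeasureTheory Set

noncomputable section

/-!
An integrable `f` has `∫ ‖f (x + h) - f x‖ ≤ 2 ∫ ‖f‖`. If its `s`-th moment is at most `M` and
`‖f (x + h) - f x‖ ≤ D` everywhere, one can do better: use the uniform bound where `x` or `x + h`
lies in the ball of radius `R`, and Markov's inequality elsewhere. In dimension `n` this costs a
multiple of `D * R ^ n + M * R ^ (-s)`, and the choice `R ^ (n + s) = M / D` makes both terms
equal to `D ^ (s / (n + s)) * M ^ (n / (n + s))`. For `D = C₁ * ‖h‖ ^ θ * t ^ (-γ)` and
`M = C₂ * t ^ κ` this is a multiple of `t ^ κ * X ^ (s / (n + s))`, where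
`X = ‖h‖ ^ θ * t ^ (-(γ + κ))`. The trivial bound handles `1 ≤ X`, so the exponent may be lowered
by any factor `τ ∈ [0, 1]`.
-/

lemma le_rpow_neg_mul_rpow_mul {R r s y : ℝ} (hR : 0 < R) (hRr : R ≤ r) (hs : 0 ≤ s)
    (hy : 0 ≤ y) : y ≤ R ^ (-s) * (r ^ s * y) := by
  have hone : 1 ≤ R ^ (-s) * r ^ s := by
    rw [Real.rpow_neg hR.le, ← div_eq_inv_mul, one_le_div (by positivity)]
    exact Real.rpow_le_rpow hR.le hRr hs
  simpa only [mul_assoc] using le_mul_of_one_le_left hy hone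

lemma exists_pos_mul_rpow_eq_rpow_mul_rpow {D M n s : ℝ} (hD : 0 < D) (hM : 0 < M)
    (hns : 0 < n + s) :
    ∃ R : ℝ, 0 < R ∧ D * R ^ n = D ^ (s / (n + s)) * M ^ (n / (n + s)) ∧
      R ^ (-s) * M = D ^ (s / (n + s)) * M ^ (n / (n + s)) := by
  have hsplit {x : ℝ} (hx : 0 < x) : x = x ^ (s / (n + s)) * x ^ (n / (n + s)) := by
    rw [← Real.rpow_add hx, ← add_div, add_comm s, div_self hns.ne', Real.rpow_one]
  refine ⟨(M / D) ^ (1 / (n + s)), by positivity, ?_, ?_⟩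
  · rw [← Real.rpow_mul (by positivity), one_div_mul_eq_div, Real.div_rpow hM.le hD.le]
    nth_rewrite 1 [hsplit hD]
    field_simp
  · rw [← Real.rpow_mul (by positivity), mul_neg, one_div_mul_eq_div,
      Real.rpow_neg (by positivity), Real.div_rpow hM.le hD.le, inv_div]
    nth_rewrite 2 [hsplit hM]
    field_simp

lemma mul_rpow_mul_mul_rpow_eq {a b c₁ c₂ d t γ κ : ℝ} (hab : a + b = 1) (hc₁ : 0 ≤ c₁)
    (hc₂ : 0 ≤ c₂) (hd : 0 ≤ d) (ht : 0 < t) :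
    (c₁ * d * t ^ (-γ)) ^ a * (c₂ * t ^ κ) ^ b =
      c₁ ^ a * c₂ ^ b * t ^ κ * (d * t ^ (-(γ + κ))) ^ a := by
  have ht_exp : t ^ (-γ * a) * t ^ (κ * b) = t ^ κ * t ^ (-(γ + κ) * a) := by
    rw [← Real.rpow_add ht, ← Real.rpow_add ht, eq_sub_of_add_eq' hab]
    ring_nf
  rw [Real.mul_rpow (by positivity) (by positivity), Real.mul_rpow hc₁ hd,
    Real.mul_rpow hc₂ (by positivity), Real.mul_rpow hd (by positivity), ← Real.rpow_mul ht.le,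
    ← Real.rpow_mul ht.le, ← Real.rpow_mul ht.le]
  linear_combination c₁ ^ a * d ^ a * c₂ ^ b * ht_exp

lemma le_max_mul_rpow_mul {A B X a τ y : ℝ} (hA : y ≤ A) (hB : y ≤ B * X ^ a) (hA₀ : 0 ≤ A)
    (hX : 0 ≤ X) (ha : 0 ≤ a) (hτ : τ ∈ Icc (0 : ℝ) 1) : y ≤ max A B * X ^ (τ * a) := by
  have hτa : 0 ≤ τ * a := mul_nonneg hτ.1 ha
  have hmax : 0 ≤ max A B := le_max_of_le_left hA₀
  rcases le_total 1 X with hX₁ | hX₁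
  · calc y ≤ max A B := le_max_of_le_left hA
      _ ≤ max A B * X ^ (τ * a) := le_mul_of_one_le_right hmax (Real.one_le_rpow hX₁ hτa)
  · calc y ≤ B * X ^ a := hB
      _ ≤ max A B * X ^ a := by gcongr; exact le_max_right A B
      _ ≤ max A B * X ^ (τ * a) := by
        gcongr max A B * ?_
        exact Real.rpow_le_rpow_of_exponent_ge' hX hX₁ hτa (mul_le_of_le_one_left ha hτ.2)

lemma integrable_and_integral_le_of_lintegral_ofReal_le {α : Type*} [MeasurableSpace α]
    {μ : Measure α} {g : α → ℝ} {M : ℝ} (hg : AEStronglyMeasurable g μ) (hg₀ : 0 ≤ᵐ[μ] g)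
    (hM₀ : 0 ≤ M) (hM : ∫⁻ x, ENNReal.ofReal (g x) ∂μ ≤ ENNReal.ofReal M) :
    Integrable g μ ∧ ∫ x, g x ∂μ ≤ M := by
  refine ⟨(lintegral_ofReal_ne_top_iff_integrable hg hg₀).1 (ne_top_of_le_ne_top
    ENNReal.ofReal_ne_top hM), ?_⟩
  rw [integral_eq_lintegral_of_nonneg_ae hg₀ hg]
  exact ENNReal.toReal_le_of_le_ofReal hM₀ hM

lemma integral_norm_translate_sub_le_two_mul {G F : Type*} [AddGroup G] [MeasurableSpace G]
    [MeasurableAdd G] [NormedAddCommGroup F] {μ : Measure G} [μ.IsAddRightInvariant]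
    {f : G → F} (hf : Integrable f μ) (h : G) :
    ∫ x, ‖f (x + h) - f x‖ ∂μ ≤ 2 * ∫ x, ‖f x‖ ∂μ := by
  have hfh : Integrable (fun x => f (x + h)) μ := hf.comp_add_right h
  calc ∫ x, ‖f (x + h) - f x‖ ∂μ ≤ ∫ x, (‖f (x + h)‖ + ‖f x‖) ∂μ :=
        integral_mono (hfh.sub hf).norm (hfh.norm.add hf.norm) fun x => norm_sub_le _ _
    _ = 2 * ∫ x, ‖f x‖ ∂μ := by
        rw [integral_add hfh.norm hf.norm, integral_add_right_eq_self (fun x => ‖f x‖) h, two_mul]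

section Translates

variable {E F : Type*} [NormedAddCommGroup E] [NormedAddCommGroup F] {f : E → F} {D R s : ℝ}

lemma norm_sub_le_indicator_ball_add_moment {x y : E} (hs : 0 ≤ s) (hR : 0 < R)
    (hD : ‖f y - f x‖ ≤ D) :
    ‖f y - f x‖ ≤ ((Metric.ball 0 R).indicator (fun _ => D) y +
        (Metric.ball 0 R).indicator (fun _ => D) x) +
      R ^ (-s) * (‖y‖ ^ s * ‖f y‖ + ‖x‖ ^ s * ‖f x‖) := by
  have hD₀ : 0 ≤ D := (norm_nonneg _).trans hD
  have hind : ∀ z, 0 ≤ (Metric.ball (0 : E) R).indicator (fun _ => D) z :=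
    indicator_nonneg fun _ _ => hD₀
  have hmom : 0 ≤ R ^ (-s) * (‖y‖ ^ s * ‖f y‖ + ‖x‖ ^ s * ‖f x‖) := by positivity
  by_cases hy : y ∈ Metric.ball 0 R
  · linarith [hind x, indicator_of_mem hy fun _ => D]
  by_cases hx : x ∈ Metric.ball 0 R
  · linarith [hind y, indicator_of_mem hx fun _ => D]
  have htail : ∀ z ∉ Metric.ball (0 : E) R, ‖f z‖ ≤ R ^ (-s) * (‖z‖ ^ s * ‖f z‖) := fun z hz =>
    le_rpow_neg_mul_rpow_mul hR (by simpa using hz) hs (norm_nonneg _)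
  calc ‖f y - f x‖ ≤ ‖f y‖ + ‖f x‖ := norm_sub_le _ _
    _ ≤ R ^ (-s) * (‖y‖ ^ s * ‖f y‖ + ‖x‖ ^ s * ‖f x‖) := by
      rw [mul_add]
      exact add_le_add (htail y hy) (htail x hx)
    _ ≤ _ := le_add_of_nonneg_left (add_nonneg (hind y) (hind x))

variable [MeasurableSpace E] [BorelSpace E] {μ : Measure E} {h : E}

lemma integral_norm_translate_sub_le_ball_add_moment [ProperSpace E] [μ.IsAddRightInvariant]
    [IsFiniteMeasureOnCompacts μ] (hf : Integrable f μ) (hs : 0 ≤ s) (hR : 0 < R)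
    (hD : ∀ x, ‖f (x + h) - f x‖ ≤ D)
    (hmom : Integrable (fun x => ‖x‖ ^ s * ‖f x‖) μ) :
    ∫ x, ‖f (x + h) - f x‖ ∂μ ≤
      2 * (D * μ.real (Metric.ball 0 R) + R ^ (-s) * ∫ x, ‖x‖ ^ s * ‖f x‖ ∂μ) := by
  set u : E → ℝ := (Metric.ball 0 R).indicator fun _ => D
  set w : E → ℝ := fun x => ‖x‖ ^ s * ‖f x‖
  have hu : Integrable u μ := (integrable_indicator_iff measurableSet_ball).2
    (integrableOn_const measure_ball_lt_top.ne)
  have huh : Integrable (fun x => u (x + h)) μ := hu.comp_add_right h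
  have hu_sum : Integrable (fun x => u (x + h) + u x) μ := huh.add hu
  have hwh : Integrable (fun x => w (x + h)) μ := hmom.comp_add_right h
  have hw_sum : Integrable (fun x => R ^ (-s) * (w (x + h) + w x)) μ :=
    (hwh.add hmom).const_mul _
  calc ∫ x, ‖f (x + h) - f x‖ ∂μ
      ≤ ∫ x, ((u (x + h) + u x) + R ^ (-s) * (w (x + h) + w x)) ∂μ :=
        integral_mono ((hf.comp_add_right h).sub hf).norm (hu_sum.add hw_sum)
          fun x => norm_sub_le_indicator_ball_add_moment hs hR (hD x)
    _ = 2 * (∫ x, u x ∂μ + R ^ (-s) * ∫ x, w x ∂μ) := by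
        rw [integral_add hu_sum hw_sum, integral_add huh hu, integral_const_mul,
          integral_add hwh hmom, integral_add_right_eq_self u h, integral_add_right_eq_self w h]
        ring
    _ = 2 * (D * μ.real (Metric.ball 0 R) + R ^ (-s) * ∫ x, w x ∂μ) := by
        rw [integral_indicator_const _ measurableSet_ball, smul_eq_mul, mul_comm D]

theorem integral_norm_translate_sub_le_rpow_mul_rpow [NormedSpace ℝ E] [FiniteDimensional ℝ E]
    [μ.IsAddHaarMeasure] {M : ℝ} (hf : Integrable f μ) (hs : 0 < s) (hM : 0 < M)
    (hD : ∀ x, ‖f (x + h) - f x‖ ≤ D)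
    (hmom : Integrable (fun x => ‖x‖ ^ s * ‖f x‖) μ) (hmomM : ∫ x, ‖x‖ ^ s * ‖f x‖ ∂μ ≤ M) :
    ∫ x, ‖f (x + h) - f x‖ ∂μ ≤ 2 * (μ.real (Metric.ball 0 1) + 1) *
      (D ^ (s / (Module.finrank ℝ E + s)) *
        M ^ (Module.finrank ℝ E / (Module.finrank ℝ E + s))) := by
  set n := Module.finrank ℝ E
  rcases ((norm_nonneg _).trans (hD 0)).eq_or_lt with rfl | hD₀
  · calc ∫ x, ‖f (x + h) - f x‖ ∂μ = 0 := by
          simp only [fun x => (hD x).antisymm (norm_nonneg _), integral_zero]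
      _ ≤ _ := by positivity
  obtain ⟨R, hR, hball, htail⟩ :=
    exists_pos_mul_rpow_eq_rpow_mul_rpow hD₀ hM (by positivity : 0 < (n : ℝ) + s)
  calc ∫ x, ‖f (x + h) - f x‖ ∂μ
      ≤ 2 * (D * μ.real (Metric.ball 0 R) + R ^ (-s) * ∫ x, ‖x‖ ^ s * ‖f x‖ ∂μ) :=
        integral_norm_translate_sub_le_ball_add_moment hf hs.le hR hD hmom
    _ ≤ 2 * (D * (R ^ n * μ.real (Metric.ball 0 1)) + R ^ (-s) * M) := by
        rw [measureReal_def, Measure.addHaar_ball_of_pos μ 0 hR, ENNReal.toReal_mul,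
          ENNReal.toReal_ofReal (by positivity), ← measureReal_def]
        gcongr
    _ = 2 * (μ.real (Metric.ball 0 1) * (D * R ^ (n : ℝ)) + R ^ (-s) * M) := by
        rw [Real.rpow_natCast]
        ring
    _ = _ := by
        rw [hball, htail]
        ring

end Translates

theorem stmt13_general {E F : Type*} [NormedAddCommGroup E] [NormedSpace ℝ E]
    [FiniteDimensional ℝ E] [MeasurableSpace E] [BorelSpace E] [NormedAddCommGroup F]
    (μ : Measure E) [μ.IsAddHaarMeasure] {T γ κ s θ C₀ C₁ C₂ : ℝ} (hκ : 0 ≤ κ) (hs : 0 < s)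
    (hC₀ : 0 < C₀) (hC₁ : 0 ≤ C₁) (hC₂ : 0 < C₂) (p : ℝ → E → F)
    (hint : ∀ t ∈ Ioc 0 T, Integrable (p t) μ)
    (hmass : ∀ t ∈ Ioc 0 T, ∫ x, ‖p t x‖ ∂μ ≤ C₀)
    (hsup : ∀ t ∈ Ioc 0 T, ∀ x h, ‖p t (x + h) - p t x‖ ≤ C₁ * ‖h‖ ^ θ * t ^ (-γ))
    (hmom : ∀ t ∈ Ioc 0 T,
      ∫⁻ x, ENNReal.ofReal (‖x‖ ^ s * ‖p t x‖) ∂μ ≤ ENNReal.ofReal (C₂ * t ^ κ)) :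
    ∃ C : ℝ, 0 < C ∧ ∀ τ ∈ Icc (0 : ℝ) 1, ∀ t ∈ Ioc 0 T, ∀ h : E,
      ∫ x, ‖p t (x + h) - p t x‖ ∂μ ≤
        C * (‖h‖ ^ θ * t ^ (-(γ + κ))) ^ (τ * s / (Module.finrank ℝ E + s)) := by
  set n := Module.finrank ℝ E
  set a := s / (n + s)
  set b := n / (n + s)
  have hab : a + b = 1 := by rw [← add_div, add_comm s, div_self (by positivity)]
  set K := 2 * (μ.real (Metric.ball 0 1) + 1) * (C₁ ^ a * C₂ ^ b)
  refine ⟨max (2 * C₀) (K * T ^ κ), lt_max_of_lt_left (by positivity), fun τ hτ t ht h => ?_⟩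
  have ht₀ : 0 < t := ht.1
  obtain ⟨hw, hwM⟩ := integrable_and_integral_le_of_lintegral_ofReal_le
    ((Measurable.aestronglyMeasurable (by fun_prop)).mul (hint t ht).1.norm)
    (ae_of_all _ fun x => mul_nonneg (Real.rpow_nonneg (norm_nonneg x) s) (norm_nonneg _))
    (by positivity) (hmom t ht)
  have htrivial : ∫ x, ‖p t (x + h) - p t x‖ ∂μ ≤ 2 * C₀ :=
    (integral_norm_translate_sub_le_two_mul (hint t ht) h).trans (by gcongr; exact hmass t ht)
  rw [mul_div_assoc]
  refine le_max_mul_rpow_mul htrivial ?_ (by positivity) (by positivity) (by positivity) hτ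
  calc ∫ x, ‖p t (x + h) - p t x‖ ∂μ
      ≤ 2 * (μ.real (Metric.ball 0 1) + 1) *
          ((C₁ * ‖h‖ ^ θ * t ^ (-γ)) ^ a * (C₂ * t ^ κ) ^ b) :=
        integral_norm_translate_sub_le_rpow_mul_rpow (hint t ht) hs (by positivity)
          (fun x => hsup t ht x h) hw hwM
    _ = K * t ^ κ * (‖h‖ ^ θ * t ^ (-(γ + κ))) ^ a := by
        rw [mul_rpow_mul_mul_rpow_eq hab hC₁ hC₂.le (by positivity) ht₀]
        ring
    _ ≤ K * T ^ κ * (‖h‖ ^ θ * t ^ (-(γ + κ))) ^ a := by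
        gcongr
        exact ht.2

theorem stmt13 (n : ℕ) (hn : 1 ≤ n) (T β κ I₀ θ C₁ C₂ : ℝ)
    (hT : 0 < T) (hβ : 0 < β) (hκ : 0 < κ) (hI₀ : I₀ ∈ Set.Ioo (0 : ℝ) 1)
    (hθ : θ ∈ Set.Ioc (0 : ℝ) 1) (hC₁ : 0 < C₁) (hC₂ : 0 < C₂)
    (p : ℝ → EuclideanSpace ℝ (Fin n) → ℝ)
    (hmeas : ∀ t ∈ Set.Ioc (0 : ℝ) T, Measurable (p t))
    (hnonneg : ∀ t ∈ Set.Ioc (0 : ℝ) T, ∀ x, 0 ≤ p t x)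
    (hintble : ∀ t ∈ Set.Ioc (0 : ℝ) T, Integrable (p t))
    (hprob : ∀ t ∈ Set.Ioc (0 : ℝ) T, ∫ x, p t x = 1)
    (hsup : ∀ t ∈ Set.Ioc (0 : ℝ) T, ∀ x h : EuclideanSpace ℝ (Fin n),
      |p t (x + h) - p t x| ≤ C₁ * ‖h‖ ^ θ * t ^ (-((θ + n) / β)))
    (hmom : ∀ t ∈ Set.Ioc (0 : ℝ) T,
      ∫⁻ x, ENNReal.ofReal (‖x‖ ^ I₀ * p t x) ≤ ENNReal.ofReal (C₂ * t ^ κ)) :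
    ∀ τ : ℝ, τ ∈ Set.Ioc (0 : ℝ) 1 →
      ∃ C : ℝ, 0 < C ∧ ∀ t ∈ Set.Ioc (0 : ℝ) T, ∀ h : EuclideanSpace ℝ (Fin n), ‖h‖ ≤ 1 →
        ∫ x, |p t (x + h) - p t x| ≤
          C * (‖h‖ ^ θ * t ^ (-((θ + n) / β + κ))) ^ (τ * I₀ / (n + I₀)) := by
  obtain ⟨C, hC, hbound⟩ := stmt13_general volume hκ.le hI₀.1 one_pos hC₁.le hC₂ p hintble
    (fun t ht => by simp only [Real.norm_of_nonneg (hnonneg t ht _), hprob t ht, le_refl]) hsup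
    (fun t ht => by simpa only [Real.norm_of_nonneg (hnonneg t ht _)] using hmom t ht)
  rw [finrank_euclideanSpace_fin] at hbound
  exact fun τ hτ => ⟨C, hC, fun t ht h _ => hbound τ (Ioc_subset_Icc_self hτ) t ht h⟩
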